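/- arXiv:1903.00579 — 5 statements merged into one kernel-verified Lean document; each statement's English description precedes it below -/
import Mathlib

section
/- Let X, Y, Z be linear orders. If G is a connection between X and Y and H is a connection between Y and Z, then the relation K = {(x, z) ∈ X × Z | there exists y' ∈ Y such that G(x, y) holds for all y ∈ Y with y' ≤ y, and H(y', z) holds} is a connection between X and Z. -/
/-- `∃^cf x, A x`: for every `x'` there exists `x ≥ x'` with `A x`. -/
def CofExists {X : Type*} [LinearOrder X] (A : X → Prop) : Prop :=
  ∀ x' : X, ∃ x : X, x' ≤ x ∧ A x

/-- `∀^cf x, A x`: there exists `x'` such that `A x` holds for all `x ≥ x'`. -/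
def CofForall {X : Type*} [LinearOrder X] (A : X → Prop) : Prop :=
  ∃ x' : X, ∀ x : X, x' ≤ x → A x

/-- `G ⊆ X × Y` is a connection between `X` and `Y` if
`∃^cf x, ∀^cf y, G x y` and `∃^cf y, ∀^cf x, ¬ G x y`. -/
def IsConnection {X Y : Type*} [LinearOrder X] [LinearOrder Y] (G : X → Y → Prop) : Prop :=
  CofExists (fun x => CofForall (fun y => G x y)) ∧
  CofExists (fun y => CofForall (fun x => ¬ G x y))

/-!
Both halves rest on one choice in `Y`: a property holding cofinally is met on a tail along which an
eventual property already holds. The point so chosen witnesses `K x z` in the first half. In the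
second half it refutes every possible witness `y'`: from below through `¬ G`, from above through
`¬ H`.
-/

section Quantifiers

variable {X : Type*} [LinearOrder X] {A B : X → Prop}

theorem CofExists.mono (hA : CofExists A) (hAB : ∀ x, A x → B x) : CofExists B := fun x' =>
  let ⟨x, hx'x, hx⟩ := hA x'
  ⟨x, hx'x, hAB x hx⟩

theorem CofForall.mono (hA : CofForall A) (hAB : ∀ x, A x → B x) : CofForall B :=
  let ⟨x', hx'⟩ := hA
  ⟨x', fun x hx'x => hAB x (hx' x hx'x)⟩

theorem CofForall.exists_forall_ge_and (hA : CofForall A) (hB : CofExists B) :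
    ∃ x', (∀ x, x' ≤ x → A x) ∧ B x' := by
  obtain ⟨x₀, hx₀⟩ := hA
  obtain ⟨x', hx₀x', hx'⟩ := hB x₀
  exact ⟨x', fun x hx'x => hx₀ x (hx₀x'.trans hx'x), hx'⟩

end Quantifiers

/-- The composite `K` of two relations: `x` is related to `z` if `H y' z` for some `y'` such that
`G x` holds on the whole tail starting at `y'`. Composing along tails, rather than at single points
as in `Relation.Comp`, is what makes composites of connections connections. -/
def TailComp {X Y Z : Type*} [LE Y] (G : X → Y → Prop) (H : Y → Z → Prop) (x : X) (z : Z) : Prop :=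
  ∃ y' : Y, (∀ y : Y, y' ≤ y → G x y) ∧ H y' z

section TailComp

variable {X Y Z : Type*} [LinearOrder Y] {G : X → Y → Prop} {H : Y → Z → Prop} {x : X} {z : Z}

theorem not_tailComp_of_forall_ge {y₁ : Y} (hG : ¬ G x y₁) (hH : ∀ y, y₁ ≤ y → ¬ H y z) :
    ¬ TailComp G H x z := by
  rintro ⟨y', hGy', hHy'⟩
  rcases le_total y' y₁ with hle | hge
  · exact hG (hGy' y₁ hle)
  · exact hH y' hge hHy'

theorem CofForall.tailComp [LinearOrder Z] (hG : CofForall fun y => G x y)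
    (hH : CofExists fun y => CofForall fun z => H y z) :
    CofForall fun z => TailComp G H x z := by
  obtain ⟨y', hGy', hHy'⟩ := hG.exists_forall_ge_and hH
  exact hHy'.mono fun _ hz => ⟨y', hGy', hz⟩

theorem CofForall.not_tailComp [LinearOrder X] (hH : CofForall fun y => ¬ H y z)
    (hG : CofExists fun y => CofForall fun x => ¬ G x y) :
    CofForall fun x => ¬ TailComp G H x z := by
  obtain ⟨y₁, hHy₁, hGy₁⟩ := hH.exists_forall_ge_and hG
  exact hGy₁.mono fun _ hx => not_tailComp_of_forall_ge hx hHy₁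

end TailComp

/-- If `G` connects `X` and `Y` and `H` connects `Y` and `Z`, then
`K = {(x,z) | ∃ y', (∀ y ≥ y', G x y) ∧ H y' z}` connects `X` and `Z`. -/
theorem isConnection_comp {X Y Z : Type*} [LinearOrder X] [LinearOrder Y] [LinearOrder Z]
    (G : X → Y → Prop) (H : Y → Z → Prop)
    (hG : IsConnection G) (hH : IsConnection H) :
    IsConnection (fun (x : X) (z : Z) =>
      ∃ y' : Y, (∀ y : Y, y' ≤ y → G x y) ∧ H y' z) :=
  ⟨hG.1.mono fun _ hx => hx.tailComp hH.1, hH.2.mono fun _ hz => hz.not_tailComp hG.2⟩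
end

section
/- Let X and Y be linear orders without greatest element. If X and Y have the same cofinality, then there exists a connection between X and Y. -/
/-- The cofinality of a linear order: the least cardinality of a subset
that is unbounded above. -/
noncomputable def cofinality (X : Type*) [LinearOrder X] : Cardinal :=
  sInf {c : Cardinal | ∃ S : Set X, (∀ b : X, ∃ y ∈ S, ¬ y ≤ b) ∧ Cardinal.mk S = c}

/-!
Let `κ` be the common cofinality, and enumerate cofinal sets of size `κ` in `X` and `Y` as `f i` and
`g i` with `i < κ`. Proper initial segments of `κ` have fewer than `κ` elements, so their images
under `f` and `g` are bounded. Let `G x y` say that `f` exceeds `x` before `g` exceeds `y`: some `i`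
has `x < f i` and `g j ≤ y` for all `j ≤ i`. For fixed `x`, choose `i` with `x < f i`; then `G x y`
holds for every `y` bounding the `g j` with `j ≤ i`. For fixed `y`, choose `k` with `y < g k`; a
witness of `G x y` must lie below `k`, so there is none once `x` bounds the `f j` with `j ≤ k`.
-/

open Cardinal Set

section Cofinality

variable {I : Type u} {X : Type v}

theorem cofinality_eq_cof [LinearOrder X] [NoMaxOrder X] : cofinality X = Order.cof X := by
  have not_le_iff_isCofinal (S : Set X) : (∀ b, ∃ y ∈ S, ¬ y ≤ b) ↔ IsCofinal S := by
    rw [← not_bddAbove_iff_isCofinal, not_bddAbove_iff]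
    simp only [not_le]
  simp only [cofinality, Order.cof, not_le_iff_isCofinal, iInf, range, Subtype.exists, exists_prop]

theorem bddAbove_image_of_lift_mk_lt_lift_cof [LinearOrder X] {s : Set I} (f : I → X)
    (hs : lift.{v} #s < lift.{u} (Order.cof X)) : BddAbove (f '' s) := by
  refine .of_not_isCofinal fun hcof => hs.not_ge ?_
  calc
    lift.{u} (Order.cof X) ≤ lift.{u} #(f '' s) := lift_le.2 (Order.cof_le hcof)
    _ ≤ lift.{v} #s := mk_image_le_lift

theorem exists_isCofinal_range_of_lift_mk_eq_lift_cof [Preorder X]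
    (hI : lift.{v} #I = lift.{u} (Order.cof X)) : ∃ f : I → X, IsCofinal (range f) := by
  obtain ⟨S, hS, hScard⟩ := Order.exists_cof_eq X
  obtain ⟨e⟩ : Nonempty (I ≃ S) := lift_mk_eq'.1 (hI.trans (congrArg lift hScard.symm))
  refine ⟨fun i => e i, ?_⟩
  rwa [← Function.comp_def, EquivLike.range_comp, Subtype.range_coe]

end Cofinality

/-- A scale in `X`: a family with cofinal range whose initial segments are bounded above. It plays
the role of a cofinal increasing transfinite sequence; asking for bounded initial segments instead
of monotonicity lets any enumeration, along an initial ordinal, of a cofinal set of least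
cardinality serve as a scale. -/
structure IsScale {I X : Type*} [Preorder I] [Preorder X] (f : I → X) : Prop where
  isCofinal_range : IsCofinal (range f)
  bddAbove_image_Iic (i : I) : BddAbove (f '' Iic i)

theorem exists_isScale {I : Type u} {X : Type v} [LinearOrder I] [WellFoundedLT I] [LinearOrder X]
    (hord : (#I).ord = Ordinal.type (α := I) (· < ·))
    (hI : lift.{v} #I = lift.{u} (Order.cof X)) : ∃ f : I → X, IsScale f := by
  obtain ⟨f, hf⟩ := exists_isCofinal_range_of_lift_mk_eq_lift_cof hI
  refine ⟨f, hf, fun i => ?_⟩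
  have bdd_Iio : BddAbove (f '' Iio i) :=
    bddAbove_image_of_lift_mk_lt_lift_cof f (hI ▸ lift_lt.2 (mk_Iio_lt i hord))
  rw [← Iio_insert, image_insert_eq]
  exact bdd_Iio.insert (f i)

namespace IsScale

variable {I X Y : Type*} {f : I → X} {g : I → Y}

theorem exists_lt [Preorder I] [Preorder X] [NoMaxOrder X] (hf : IsScale f) (x : X) :
    ∃ i, x < f i := by
  obtain ⟨x', hx⟩ := exists_gt x
  obtain ⟨_, ⟨i, rfl⟩, hi⟩ := hf.isCofinal_range x'
  exact ⟨i, hx.trans_le hi⟩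

theorem isConnection [LinearOrder I] [LinearOrder X] [LinearOrder Y] [NoMaxOrder X] [NoMaxOrder Y]
    (hf : IsScale f) (hg : IsScale g) :
    IsConnection fun x y => ∃ i, x < f i ∧ y ∈ upperBounds (g '' Iic i) := by
  refine ⟨fun x => ⟨x, le_rfl, ?_⟩, fun y => ⟨y, le_rfl, ?_⟩⟩
  · obtain ⟨i, hi⟩ := hf.exists_lt x
    obtain ⟨b, hb⟩ := hg.bddAbove_image_Iic i
    exact ⟨b, fun y hby => ⟨i, hi, upperBounds_mono_mem hby hb⟩⟩
  · obtain ⟨k, hk⟩ := hg.exists_lt y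
    obtain ⟨b, hb⟩ := hf.bddAbove_image_Iic k
    refine ⟨b, fun x hbx ⟨i, hi, hy⟩ => ?_⟩
    rcases le_total i k with hik | hki
    · exact hi.not_ge ((hb (mem_image_of_mem f hik)).trans hbx)
    · exact hk.not_ge (hy (mem_image_of_mem g hki))

end IsScale

/-- Two linear orders without greatest element with the same cofinality are connected. -/
theorem exists_connection_of_cofinality_eq {X : Type u} {Y : Type v}
    [LinearOrder X] [LinearOrder Y]
    (hX : ¬ ∃ m : X, ∀ x : X, x ≤ m) (hY : ¬ ∃ m : Y, ∀ y : Y, y ≤ m)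
    (hcof : Cardinal.lift.{v} (cofinality X) = Cardinal.lift.{u} (cofinality Y)) :
    ∃ G : X → Y → Prop, IsConnection G := by
  have : NoMaxOrder X := ⟨by simpa using hX⟩
  have : NoMaxOrder Y := ⟨by simpa using hY⟩
  rw [cofinality_eq_cof, cofinality_eq_cof] at hcof
  let I := (Order.cof X).ord.ToType
  have mk_I : #I = Order.cof X := mk_ord_toType _
  have ord_mk_I : (#I).ord = Ordinal.type (α := I) (· < ·) := by rw [mk_I, Ordinal.type_toType]
  obtain ⟨f, hf⟩ : ∃ f : I → X, IsScale f := exists_isScale ord_mk_I (by rw [mk_I])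
  obtain ⟨g, hg⟩ : ∃ g : I → Y, IsScale g := exists_isScale ord_mk_I (by rw [mk_I, hcof])
  exact ⟨_, hf.isConnection hg⟩
end

section
/- Let X and Y be linear orders without greatest element and let κ be an ordinal. Suppose (x_α | α < κ) is a strictly increasing sequence in X whose range is unbounded above in X, and (y_α | α < κ) is a strictly increasing sequence in Y whose range is unbounded above in Y. Then the relation G = {(x, y) ∈ X × Y | there exists α < κ with x ≤ x_α and y_α ≤ y} is a connection between X and Y. -/
/-! Given `x`, pick `α` with `x ≤ x_α`: then `G x y` for all `y ≥ y_α`. Given `y`, pick `α` with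
`y < y_α`: if `x_α < x`, a witness `β` of `G x y` would satisfy `x_α < x ≤ x_β`, hence
`y_α ≤ y_β ≤ y`. -/

theorem CofExists.of_forall {X : Type*} [LinearOrder X] {A : X → Prop} (hA : ∀ x, A x) :
    CofExists A :=
  fun x => ⟨x, le_rfl, hA x⟩

section

variable {ι X Y : Type*} [LinearOrder X] [LinearOrder Y] {xseq : ι → X} {yseq : ι → Y}

theorem cofForall_exists_le_and_le (hx : IsCofinal (Set.range xseq)) (x : X) :
    CofForall fun y => ∃ α, x ≤ xseq α ∧ yseq α ≤ y := by
  obtain ⟨_, ⟨α, rfl⟩, hxα⟩ := hx x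
  exact ⟨yseq α, fun y hy => ⟨α, hxα, hy⟩⟩

theorem cofForall_not_exists_le_and_le [NoMaxOrder X] (hmono : Monovary yseq xseq)
    (hy : ¬ BddAbove (Set.range yseq)) (y : Y) :
    CofForall fun x => ¬ ∃ α, x ≤ xseq α ∧ yseq α ≤ y := by
  obtain ⟨_, ⟨α, rfl⟩, hyα⟩ := not_bddAbove_iff.mp hy y
  obtain ⟨x', hx'⟩ := exists_gt (xseq α)
  refine ⟨x', fun x hx ⟨β, hxβ, hβy⟩ => hyα.not_ge ?_⟩
  have hαβ : xseq α < xseq β := hx'.trans_le (hx.trans hxβ)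
  exact (hmono hαβ).trans hβy

theorem isConnection_of_unbounded_sequences_general (hmono : Monovary yseq xseq)
    (hx : ¬ BddAbove (Set.range xseq)) (hy : ¬ BddAbove (Set.range yseq)) :
    IsConnection fun x y => ∃ α, x ≤ xseq α ∧ yseq α ≤ y := by
  have : NoMaxOrder X := ⟨fun b => (not_bddAbove_iff.mp hx b).imp fun _ h => h.2⟩
  have hcof : IsCofinal (Set.range xseq) := not_bddAbove_iff_isCofinal.mp hx
  exact ⟨.of_forall (cofForall_exists_le_and_le hcof),
    .of_forall (cofForall_not_exists_le_and_le hmono hy)⟩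

end

/-- If `(x_α | α < κ)` and `(y_α | α < κ)` are strictly increasing sequences, unbounded
above in `X` and `Y` respectively, where `X` and `Y` have no greatest element, then
`G = {(x, y) | ∃ α < κ, x ≤ x_α ∧ y_α ≤ y}` is a connection between `X` and `Y`. -/
theorem isConnection_of_unbounded_sequences {X Y : Type*} [LinearOrder X] [LinearOrder Y]
    (hX : ¬ ∃ m : X, ∀ x : X, x ≤ m) (hY : ¬ ∃ m : Y, ∀ y : Y, y ≤ m)
    (κ : Ordinal) (xseq : Set.Iio κ → X) (yseq : Set.Iio κ → Y)
    (hxmono : StrictMono xseq) (hymono : StrictMono yseq)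
    (hxunb : ∀ b : X, ∃ α : Set.Iio κ, ¬ xseq α ≤ b)
    (hyunb : ∀ b : Y, ∃ α : Set.Iio κ, ¬ yseq α ≤ b) :
    IsConnection (fun (x : X) (y : Y) => ∃ α : Set.Iio κ, x ≤ xseq α ∧ yseq α ≤ y) :=
  isConnection_of_unbounded_sequences_general (hymono.monotone.monovary hxmono.monotone)
    (by simpa [not_bddAbove_iff] using hxunb) (by simpa [not_bddAbove_iff] using hyunb)
end

section
/- Let X and Y be linear orders and let G be a connection between X and Y. Suppose (x_α | α < κ) is a family of elements of X whose range is unbounded above in X, and for each α < κ the element y_α ∈ Y satisfies: G(x_α, y) holds for every y ∈ Y with y_α ≤ y. Then the set {y_α | α < κ} is unbounded above in Y. -/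
section

variable {X Y : Type*} [LinearOrder X] [LinearOrder Y] {ι : Sort*}

theorem CofForall.exists_apply_of_unbounded {A : X → Prop} (hA : CofForall A) {x : ι → X}
    (hx : ∀ b : X, ∃ i, ¬ x i ≤ b) : ∃ i, A (x i) := by
  obtain ⟨x₀, hx₀⟩ := hA
  obtain ⟨i, hi⟩ := hx x₀
  exact ⟨i, hx₀ (x i) (le_of_not_ge hi)⟩

theorem unbounded_of_connection_general {G : X → Y → Prop}
    (hG : CofExists fun y => CofForall fun x => ¬ G x y) {x : ι → X} {y : ι → Y}
    (hx : ∀ b : X, ∃ i, ¬ x i ≤ b) (hy : ∀ i, ∀ y' : Y, y i ≤ y' → G (x i) y') :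
    ∀ b : Y, ∃ i, ¬ y i ≤ b := by
  intro b
  obtain ⟨y', hby', hnotG⟩ := hG b
  obtain ⟨i, hi⟩ := hnotG.exists_apply_of_unbounded hx
  exact ⟨i, fun hyb => hi (hy i y' (hyb.trans hby'))⟩

end

/-- If `G` connects `X` and `Y`, `(x_α | α < κ)` has range unbounded above in `X`, and
for each `α` the element `y_α` satisfies `∀ y ≥ y_α, G (x_α) y`, then the `y_α` are
unbounded above in `Y`. -/
theorem unbounded_of_connection {X Y : Type*} [LinearOrder X] [LinearOrder Y]
    (G : X → Y → Prop) (hG : IsConnection G)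
    (κ : Ordinal) (xseq : Set.Iio κ → X) (yseq : Set.Iio κ → Y)
    (hxunb : ∀ b : X, ∃ α : Set.Iio κ, ¬ xseq α ≤ b)
    (hy : ∀ α : Set.Iio κ, ∀ y : Y, yseq α ≤ y → G (xseq α) y) :
    ∀ b : Y, ∃ α : Set.Iio κ, ¬ yseq α ≤ b :=
  unbounded_of_connection_general hG.2 hxunb hy
end

section
/- Let M be a structure in a first-order language L, and let <_φ and <_ψ be two linear orderings of the universe of M, each without greatest element, that are definable in M with parameters from M. Assume that <_φ and <_ψ are not definably connected, i.e., no relation G ⊆ M × M definable in M with parameters from M is a connection between (M, <_φ) and (M, <_ψ). Let c be a new constant symbol and let T' be the theory in the language L(M) ∪ {c} consisting of the elementary diagram of M (the set of all L(M)-sentences true in M with each element of M named by a constant) together with the sentences m <_φ c for every m ∈ M. Then T' does not isolate the partial type Σ(y) = {n <_ψ y | n ∈ M}; that is, there is no L(M) ∪ {c}-formula γ(y) in one free variable such that T' ∪ {∃y γ(y)} is satisfiable and, for every n ∈ M, every model of T' satisfies ∀y (γ(y) → n <_ψ y). -/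
open FirstOrder FirstOrder.Language

universe u

/-- A connection between `(X, <ₓ)` and `(Y, <ᵧ)`, for strict linear orders given as relations:
`∃^cf x, ∀^cf y, G x y` and `∃^cf y, ∀^cf x, ¬ G x y`, where `a ≤ b` abbreviates
`a < b ∨ a = b`. -/
def IsConnectionRel {X Y : Type*} (ltx : X → X → Prop) (lty : Y → Y → Prop)
    (G : X → Y → Prop) : Prop :=
  (∀ x₀ : X, ∃ x : X, (ltx x₀ x ∨ x₀ = x) ∧
    ∃ y₀ : Y, ∀ y : Y, (lty y₀ y ∨ y₀ = y) → G x y) ∧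
  (∀ y₀ : Y, ∃ y : Y, (lty y₀ y ∨ y₀ = y) ∧
    ∃ x₀ : X, ∀ x : X, (ltx x₀ x ∨ x₀ = x) → ¬ G x y)

/-- The theory `T' = Th(M, m)_{m ∈ M} ∪ {m <_φ c | m ∈ M}` in the language `L(M) ∪ {c}`,
where `c` is a new constant symbol, `Th(M, m)_{m ∈ M}` is the elementary diagram of `M`, and
`<_φ` is defined by the `L(M)`-formula `φfml`. -/
def Tprime (L : FirstOrder.Language.{u, u}) (M : Type u) [L.Structure M]
    (φfml : L[[M]].Formula (Fin 2)) : (L[[M]][[Unit]]).Theory :=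
  (lhomWithConstants (L[[M]]) Unit).onTheory (L.elementaryDiagram M) ∪
    Set.range (fun m : M =>
      ((lhomWithConstants (L[[M]]) Unit).onFormula φfml).subst
        ![(lhomWithConstants (L[[M]]) Unit).onTerm (Constants.term (L.con m)),
          Constants.term ((L[[M]]).con ())])

/-!
Write `(M, x)` for the expansion of `M` in which the new constant `c` denotes `x`. By compactness
and elementarity, a formula is a consequence of `T'` exactly when it is valid in `(M, x)` for all
sufficiently `<_φ`-large `x`. If `γ(c, y)` isolated `Σ(y)`, then `γ(x, ·)` would have a realization
for cofinally many `x`, while for each `n` all realizations of `γ(x, ·)` would lie `<_ψ`-above `n`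
for every sufficiently large `x`. The definable relation `∃ z ≤_ψ y, γ(x, z)` would therefore be a
connection.
-/

section TailFilter

open Filter

variable {X Y : Type*} {r : X → X → Prop}

/-- The filter generated by the final segments `{x | r m x}`. For a strict linear order without
greatest element, `∀ᶠ` and `∃ᶠ` along this filter are the quantifiers `∀^cf` and `∃^cf`. -/
def tailFilter (r : X → X → Prop) : Filter X :=
  ⨅ m, 𝓟 {x | r m x}

theorem eventually_rel_tailFilter (m : X) : ∀ᶠ x in tailFilter r, r m x :=
  mem_iInf_of_mem m (mem_principal_self _)

theorem hasBasis_tailFilter [Nonempty X] [IsTrans X r] [IsDirected X r] :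
    (tailFilter r).HasBasis (fun _ => True) fun m => {x | r m x} := by
  refine hasBasis_iInf_principal fun a b => ?_
  obtain ⟨c, hac, hbc⟩ := directed_of r a b
  exact ⟨c, fun _ hcx => _root_.trans hac hcx, fun _ hcx => _root_.trans hbc hcx⟩

theorem isDirected_of_forall_exists_rel [IsTrans X r] [Std.Trichotomous r]
    (hr : ∀ a, ∃ b, r a b) : IsDirected X r where
  directed a b := by
    obtain ⟨c, hac⟩ := hr a
    obtain ⟨d, hbd⟩ := hr b
    rcases trichotomous_of r a b with hab | rfl | hba
    · exact ⟨d, _root_.trans hab hbd, hbd⟩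
    · exact ⟨c, hac, hac⟩
    · exact ⟨c, hac, _root_.trans hba hac⟩

theorem isConnectionRel_of_frequently_of_eventually [Nonempty X] [IsTrans X r] [IsDirected X r]
    {s : Y → Y → Prop} [Std.Asymm s] {R : X → Y → Prop}
    (hfreq : ∃ᶠ x in tailFilter r, ∃ y, R x y)
    (hev : ∀ n, ∀ᶠ x in tailFilter r, ∀ y, R x y → s n y) :
    IsConnectionRel r s fun x y => ∃ z, (s z y ∨ z = y) ∧ R x z := by
  refine ⟨fun x₀ => ?_, fun y₀ => ?_⟩
  · obtain ⟨x, hx, z, hz⟩ := hasBasis_tailFilter.frequently_iff.1 hfreq x₀ trivial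
    exact ⟨x, .inl hx, z, fun y hzy => ⟨z, hzy, hz⟩⟩
  · obtain ⟨m, -, hm⟩ := hasBasis_tailFilter.eventually_iff.1 (hev y₀)
    obtain ⟨x₀, hmx₀, -⟩ := directed_of r m m
    refine ⟨y₀, .inr rfl, x₀, ?_⟩
    rintro x hx₀x ⟨z, hzy₀, hz⟩
    have hmx : r m x := hx₀x.elim (_root_.trans hmx₀) fun h => h ▸ hmx₀
    have hy₀z : s y₀ z := hm hmx z hz
    rcases hzy₀ with hzy₀ | rfl
    · exact asymm hy₀z hzy₀
    · exact asymm hy₀z hy₀z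

end TailFilter

section Formulas

variable {K : Language} {M β : Type*} [K.Structure M]

theorem realize_subst_pair {χ : K.Formula (Fin 2)} {t₁ t₂ : K.Term β} {v : β → M} :
    Formula.Realize (χ.subst ![t₁, t₂]) v ↔ χ.Realize ![t₁.realize v, t₂.realize v] := by
  refine BoundedFormula.realize_subst.trans (iff_of_eq ?_)
  congr 1
  ext i
  fin_cases i <;> rfl

theorem exists_formula_iff_exists_le {s : M → M → Prop} {ψ : K.Formula (Fin 2)}
    (hψ : ∀ a b, s a b ↔ ψ.Realize ![a, b]) (θ : K.Formula (Unit ⊕ Fin 1)) :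
    ∃ χ : K.Formula (Fin 2), ∀ x y : M,
      (∃ z, (s z y ∨ z = y) ∧ θ.Realize (Sum.elim (fun _ => x) fun _ => z)) ↔
        χ.Realize ![x, y] := by
  let yTerm : K.Term (Fin 2 ⊕ Unit) := .var (.inl 1)
  let zTerm : K.Term (Fin 2 ⊕ Unit) := .var (.inr ())
  let xz : Unit ⊕ Fin 1 → Fin 2 ⊕ Unit := Sum.elim (fun _ => .inl 0) fun _ => .inr ()
  let χ : K.Formula (Fin 2 ⊕ Unit) := (ψ.subst ![zTerm, yTerm] ⊔ zTerm.equal yTerm) ⊓ θ.relabel xz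
  have realize_χ (x y : M) (z : Unit → M) : χ.Realize (Sum.elim ![x, y] z) ↔
      (s (z ()) y ∨ z () = y) ∧ θ.Realize (Sum.elim (fun _ => x) fun _ => z ()) := by
    have hxz : Sum.elim ![x, y] z ∘ xz = Sum.elim (fun _ => x) fun _ => z () := by
      ext (_ | _) <;> rfl
    rw [Formula.realize_inf, Formula.realize_sup, realize_subst_pair, Formula.realize_equal,
      Formula.realize_relabel, hxz, hψ]
    rfl
  refine ⟨χ.iExs Unit, fun x y => ?_⟩
  simp only [Formula.realize_iExs, realize_χ]
  exact (Equiv.funUnique Unit M).symm.exists_congr_left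

variable [Finite β]

/-- The universal closure of a formula in finitely many free variables, which brings validity of the
formula within reach of the compactness theorem and of complete theories. -/
noncomputable def universalClosure (χ : K.Formula β) : K.Sentence :=
  Formula.iAlls β (χ.relabel Sum.inr : K.Formula (Empty ⊕ β))

theorem realize_universalClosure {χ : K.Formula β} :
    M ⊨ universalClosure χ ↔ ∀ v : β → M, χ.Realize v := by
  simp only [universalClosure, Sentence.Realize, Formula.realize_iAlls, Formula.realize_relabel]
  rfl

end Formulas

section Constants

variable {K : Language} {M α β : Type*} [K.Structure M]

theorem realize_constantsVarsEquiv_elim {γ : K[[α]].Formula β} {c : α → M} {v : β → M} :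
    Formula.Realize (BoundedFormula.constantsVarsEquiv γ) (Sum.elim c v) ↔
      letI := constantsOn.structure c
      γ.Realize v :=
  letI := constantsOn.structure c
  BoundedFormula.realize_constantsVarsEquiv

theorem realize_constantsVarsEquiv_onFormula {χ : K.Formula β} {c : α → M} {v : β → M} :
    Formula.Realize (BoundedFormula.constantsVarsEquiv ((lhomWithConstants K α).onFormula χ))
      (Sum.elim c v) ↔ χ.Realize v :=
  letI := constantsOn.structure c
  realize_constantsVarsEquiv_elim.trans (LHom.realize_onFormula _ χ)

theorem realize_onFormula_subst_constants [K[[α]].Structure M]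
    [(lhomWithConstants K α).IsExpansionOn M] {φ : K.Formula (Fin 2)} {k : K.Constants} {a : α} :
    M ⊨ (((lhomWithConstants K α).onFormula φ).subst
        ![(lhomWithConstants K α).onTerm k.term, (K.con a).term] : K[[α]].Sentence) ↔
      φ.Realize ![(k : M), (K.con a : M)] := by
  rw [Sentence.Realize, realize_subst_pair, LHom.realize_onFormula, LHom.realize_onTerm,
    Term.realize_constants, Term.realize_constants]

theorem eventually_forall_realize_of_models [Nonempty M] [Finite β] {ι : Type*} {F : Filter ι}
    {c : ι → α → M} {T : K[[α]].Theory}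
    (hT : ∀ σ ∈ T, ∀ᶠ i in F, (Formula.equivSentence.symm σ).Realize (c i))
    {γ : K[[α]].Formula β} (hγ : T ⊨ᵇ γ) :
    ∀ᶠ i in F, ∀ v : β → M,
      Formula.Realize (BoundedFormula.constantsVarsEquiv γ) (Sum.elim (c i) v) := by
  have hclosure : T ⊨ᵇ universalClosure γ := Theory.models_sentence_iff.2 fun N =>
    realize_universalClosure.2 fun _ => hγ.realize_formula N
  obtain ⟨T₀, hT₀T, hT₀⟩ := Theory.models_iff_finset_models.1 hclosure
  filter_upwards [(Filter.eventually_all_finset T₀).2 fun σ hσ => hT σ (hT₀T hσ)] with i hi v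
  let _ := constantsOn.structure (c i)
  have : M ⊨ (T₀ : K[[α]].Theory) :=
    ⟨fun σ hσ => (Formula.realize_equivSentence_symm M σ (c i)).1 (hi σ hσ)⟩
  exact realize_constantsVarsEquiv_elim.2
    (realize_universalClosure.1 (hT₀.realize_sentence M) v)

end Constants

section Tprime

variable {L : FirstOrder.Language.{u, u}} {M : Type u} [L.Structure M]
  {φ : L[[M]].Formula (Fin 2)} {r : M → M → Prop}

theorem eventually_realize_of_mem_Tprime (hr : ∀ a b, r a b ↔ φ.Realize ![a, b])
    {σ : (L[[M]][[Unit]]).Sentence} (hσ : σ ∈ Tprime L M φ) :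
    ∀ᶠ x in tailFilter r, (Formula.equivSentence.symm σ).Realize fun _ => x := by
  rcases hσ with ⟨τ, hτ, rfl⟩ | ⟨m, rfl⟩
  · refine .of_forall fun x => (Formula.realize_equivSentence_symm M _ _).2 ?_
    let _ := constantsOn.structure fun _ : Unit => x
    exact (LHom.realize_onSentence M _ τ).2 hτ
  · filter_upwards [eventually_rel_tailFilter m] with x hmx
    refine (Formula.realize_equivSentence_symm M _ _).2 ?_
    let _ := constantsOn.structure fun _ : Unit => x
    exact realize_onFormula_subst_constants.2 ((hr m x).1 hmx)

theorem Tprime_models_iff_eventually [Nonempty M] [IsTrans M r] [IsDirected M r]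
    (hr : ∀ a b, r a b ↔ φ.Realize ![a, b]) {β : Type*} [Finite β]
    {γ : (L[[M]][[Unit]]).Formula β} :
    Tprime L M φ ⊨ᵇ γ ↔ ∀ᶠ x in tailFilter r, ∀ v : β → M,
      Formula.Realize (BoundedFormula.constantsVarsEquiv γ) (Sum.elim (fun _ => x) v) := by
  refine ⟨eventually_forall_realize_of_models fun _ => eventually_realize_of_mem_Tprime hr,
    fun h => Theory.models_formula_iff.2 fun N v => ?_⟩
  obtain ⟨m, -, hm⟩ := hasBasis_tailFilter.eventually_iff.1 h
  let _ : L[[M]].Structure N := (lhomWithConstants L[[M]] Unit).reduct N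
  obtain ⟨hdiag, hlt⟩ := Theory.model_union_iff.1 N.is_model
  have _ : N ⊨ L.elementaryDiagram M := (LHom.onTheory_model _ _).1 hdiag
  let χ : L[[M]].Formula (Unit ⊕ β) :=
    (φ.subst ![Constants.term (L.con m), .var (.inl ())]).imp (BoundedFormula.constantsVarsEquiv γ)
  have hMχ : M ⊨ universalClosure χ := by
    refine realize_universalClosure.2 fun w => Formula.realize_imp.2 fun hw => ?_
    rw [← Sum.elim_comp_inl_inr w]
    exact hm ((hr _ _).2 (realize_subst_pair.1 hw)) _
  have hNχ : N ⊨ universalClosure χ := (realize_iff_of_model_completeTheory M N _).2 hMχ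
  have hmc := realize_onFormula_subst_constants.1 (hlt.realize_of_mem _ ⟨m, rfl⟩)
  exact BoundedFormula.realize_constantsVarsEquiv.1
    (Formula.realize_imp.1 (realize_universalClosure.1 hNχ (Sum.elim _ v))
      (realize_subst_pair.2 (by simpa using hmc)))

theorem frequently_exists_realize_of_Tprime_model [Nonempty M] [IsTrans M r] [IsDirected M r]
    (hr : ∀ a b, r a b ↔ φ.Realize ![a, b]) {γ : (L[[M]][[Unit]]).Formula (Fin 1)}
    {N : Theory.ModelType.{u, u, u} (Tprime L M φ)} {b : N} (hb : γ.Realize fun _ => b) :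
    ∃ᶠ x in tailFilter r, ∃ y : M,
      Formula.Realize (BoundedFormula.constantsVarsEquiv γ)
        (Sum.elim (fun _ => x) fun _ => y) := by
  intro hnone
  have hnot : Tprime L M φ ⊨ᵇ γ.not := (Tprime_models_iff_eventually hr).2 <|
    hnone.mono fun x hx v hv => hx ⟨v 0, by rwa [eq_const_of_unique v] at hv⟩
  exact Formula.realize_not.1 (Theory.models_formula_iff.1 hnot N _) hb

theorem eventually_forall_rel_of_Tprime_models [Nonempty M] [IsTrans M r] [IsDirected M r]
    (hr : ∀ a b, r a b ↔ φ.Realize ![a, b]) {s : M → M → Prop} {ψ : L[[M]].Formula (Fin 2)}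
    (hs : ∀ a b, s a b ↔ ψ.Realize ![a, b]) {γ : (L[[M]][[Unit]]).Formula (Fin 1)} {n : M}
    (hγ : ∀ (N : Theory.ModelType.{u, u, u} (Tprime L M φ)) (b : N), γ.Realize (fun _ => b) →
      ((lhomWithConstants (L[[M]]) Unit).onFormula ψ).Realize
        ![Term.realize (fun x : Empty => x.elim)
            ((lhomWithConstants (L[[M]]) Unit).onTerm (Constants.term (L.con n))), b]) :
    ∀ᶠ x in tailFilter r, ∀ y : M,
      Formula.Realize (BoundedFormula.constantsVarsEquiv γ)
        (Sum.elim (fun _ => x) fun _ => y) → s n y := by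
  let above : L[[M]].Formula (Fin 1) := ψ.subst ![Constants.term (L.con n), .var 0]
  have himp : Tprime L M φ ⊨ᵇ γ.imp ((lhomWithConstants L[[M]] Unit).onFormula above) := by
    refine Theory.models_formula_iff.2 fun N v => Formula.realize_imp.2 fun hv => ?_
    rw [eq_const_of_unique v] at hv ⊢
    let _ : L[[M]].Structure N := (lhomWithConstants L[[M]] Unit).reduct N
    have hN := hγ N _ hv
    rw [LHom.realize_onFormula, LHom.realize_onTerm, Term.realize_constants] at hN
    rw [LHom.realize_onFormula, realize_subst_pair, Term.realize_constants]
    exact hN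
  filter_upwards [(Tprime_models_iff_eventually hr).1 himp] with x hx y hy
  have habove := realize_constantsVarsEquiv_onFormula.1 (hx _ hy)
  exact (hs n y).2 (realize_subst_pair.1 habove)

end Tprime

theorem Tprime_does_not_isolate_general {L : FirstOrder.Language.{u, u}} {M : Type u} [Nonempty M]
    [L.Structure M] (ltφ ltψ : M → M → Prop)
    (φfml ψfml : L[[M]].Formula (Fin 2))
    (hφdef : ∀ a b : M, ltφ a b ↔ φfml.Realize ![a, b])
    (hψdef : ∀ a b : M, ltψ a b ↔ ψfml.Realize ![a, b])
    [IsTrans M ltφ] [IsDirected M ltφ] [Std.Asymm ltψ]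
    (hnotcon : ∀ G : M → M → Prop,
      (∃ χ : L[[M]].Formula (Fin 2), ∀ a b : M, G a b ↔ χ.Realize ![a, b]) →
      ¬ IsConnectionRel ltφ ltψ G) :
    ¬ ∃ γ : (L[[M]][[Unit]]).Formula (Fin 1),
      (∃ (N : Theory.ModelType.{u, u, u} (Tprime L M φfml)) (b : N), γ.Realize (fun _ => b)) ∧
      (∀ (N : Theory.ModelType.{u, u, u} (Tprime L M φfml)) (n : M) (b : N),
        γ.Realize (fun _ => b) →
        ((lhomWithConstants (L[[M]]) Unit).onFormula ψfml).Realize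
          ![Term.realize (fun x : Empty => x.elim)
              ((lhomWithConstants (L[[M]]) Unit).onTerm (Constants.term (L.con n))), b]) := by
  rintro ⟨γ, ⟨N, b, hb⟩, hγ⟩
  have hfreq := frequently_exists_realize_of_Tprime_model hφdef hb
  have hev (n : M) := eventually_forall_rel_of_Tprime_models hφdef hψdef fun N => hγ N n
  exact hnotcon _ (exists_formula_iff_exists_le hψdef (BoundedFormula.constantsVarsEquiv γ))
    (isConnectionRel_of_frequently_of_eventually hfreq hev)

/-- Lemma 3.1: if the definable linear orderings `<_φ` and `<_ψ` of `M`, both without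
greatest element, are not definably connected, then the theory
`T' = Th(M, m)_{m ∈ M} ∪ {m <_φ c | m ∈ M}` does not isolate the partial type
`Σ(y) = {n <_ψ y | n ∈ M}`: there is no formula `γ(y)` of `L(M) ∪ {c}` in one free
variable such that `T' ∪ {∃y γ(y)}` is satisfiable and every model of `T'` satisfies
`∀y (γ(y) → n <_ψ y)` for each `n ∈ M`. -/
theorem Tprime_does_not_isolate {L : FirstOrder.Language.{u, u}} {M : Type u} [Nonempty M]
    [L.Structure M] (ltφ ltψ : M → M → Prop)
    (φfml ψfml : L[[M]].Formula (Fin 2))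
    (hφdef : ∀ a b : M, ltφ a b ↔ φfml.Realize ![a, b])
    (hψdef : ∀ a b : M, ltψ a b ↔ ψfml.Realize ![a, b])
    (hφlin : IsStrictTotalOrder M ltφ) (hψlin : IsStrictTotalOrder M ltψ)
    (hφnomax : ∀ a : M, ∃ b : M, ltφ a b) (hψnomax : ∀ a : M, ∃ b : M, ltψ a b)
    (hnotcon : ∀ G : M → M → Prop,
      (∃ χ : L[[M]].Formula (Fin 2), ∀ a b : M, G a b ↔ χ.Realize ![a, b]) →
      ¬ IsConnectionRel ltφ ltψ G) :
    ¬ ∃ γ : (L[[M]][[Unit]]).Formula (Fin 1),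
      (∃ (N : Theory.ModelType.{u, u, u} (Tprime L M φfml)) (b : N), γ.Realize (fun _ => b)) ∧
      (∀ (N : Theory.ModelType.{u, u, u} (Tprime L M φfml)) (n : M) (b : N),
        γ.Realize (fun _ => b) →
        ((lhomWithConstants (L[[M]]) Unit).onFormula ψfml).Realize
          ![Term.realize (fun x : Empty => x.elim)
              ((lhomWithConstants (L[[M]]) Unit).onTerm (Constants.term (L.con n))), b]) := by
  have := isDirected_of_forall_exists_rel hφnomax
  exact Tprime_does_not_isolate_general ltφ ltψ φfml ψfml hφdef hψdef hnotcon
end
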